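/- For |q| < 1: Σ_{n ≥ 0} q^{n^2 + 2n} (-q;q^2)_n / (q^4;q^4)_n = ((-q;q^2)_∞ / (q^2;q^2)_∞) · (q;q^6)_∞ (q^5;q^6)_∞ (q^6;q^6)_∞. -/

import Mathlib

/-- Finite q-Pochhammer symbol `(x;q)_n = ∏_{k=0}^{n-1} (1 - x q^k)`. -/
noncomputable def qPoch (x q : ℂ) (n : ℕ) : ℂ := ∏ k ∈ Finset.range n, (1 - x * q ^ k)

/-- Infinite q-Pochhammer symbol `(x;q)_∞ = ∏_{k≥0} (1 - x q^k)`. -/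
noncomputable def qPochInf (x q : ℂ) : ℂ := ∏' k : ℕ, (1 - x * q ^ k)

/-! Sequences `α`, `β` form a Bailey pair when `β n` is a certain weighted sum of `α 0, …, α n`.
Bailey's lemma, which amounts to the `q`-Chu–Vandermonde sum, turns one such pair into another, and
computing the limit of the new `β` both from its definition and from the pair relation gives an
identity between two infinite series.

The finite Jacobi triple product says that the terms of a theta series, folded from `ℤ` to `ℕ`, form
the `α` of a Bailey pair with a product as `β`. At `(x, y) = (q, 1)` this `β` is supported at `0`,
and one step of Bailey's lemma leads to a pair with `β n = (1 - q) / (q²; q²)_n`. A second step, in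
base `q²`, produces the left-hand side; the `α` of the resulting pair is again a folded theta
series, now with `(x, y) = (q, q⁵)`, which the limiting triple product sums. -/

open Filter Finset Topology

lemma norm_mul_self_lt_one {R : Type*} [SeminormedRing R] {a : R} (ha : ‖a‖ < 1) :
    ‖a * a‖ < 1 :=
  (norm_mul_le a a).trans_lt (mul_lt_one_of_nonneg_of_lt_one_left (norm_nonneg a) ha ha.le)

section FiniteSymbols

variable (x q : ℂ)

@[simp] lemma qPoch_zero : qPoch x q 0 = 1 := prod_range_zero _

@[simp] lemma qPoch_zero_left (n : ℕ) : qPoch 0 q n = 1 := by simp [qPoch]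

lemma qPoch_succ (n : ℕ) : qPoch x q (n + 1) = qPoch x q n * (1 - x * q ^ n) :=
  prod_range_succ _ _

lemma qPoch_add (m n : ℕ) : qPoch x q (m + n) = qPoch x q m * qPoch (x * q ^ m) q n := by
  simp only [qPoch, prod_range_add, pow_add, mul_assoc]

lemma qPoch_succ' (n : ℕ) : qPoch x q (n + 1) = (1 - x) * qPoch (x * q) q n := by
  rw [add_comm, qPoch_add]
  simp [qPoch]

lemma qPoch_mul_qPoch_neg (n : ℕ) : qPoch x q n * qPoch (-x) q n = qPoch (x ^ 2) (q ^ 2) n := by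
  simp only [qPoch, ← prod_mul_distrib]
  exact prod_congr rfl fun k _ => by ring

variable {x q}

lemma qPoch_ne_zero (hx : ‖x‖ < 1) (hq : ‖q‖ ≤ 1) (n : ℕ) : qPoch x q n ≠ 0 := by
  refine prod_ne_zero_iff.mpr fun k _ => sub_ne_zero.mpr fun h => ?_
  have hlt : ‖x * q ^ k‖ < 1 := by
    rw [norm_mul, norm_pow]
    exact mul_lt_one_of_nonneg_of_lt_one_left (norm_nonneg _) hx (pow_le_one₀ (norm_nonneg _) hq)
  rw [← h, norm_one] at hlt
  exact lt_irrefl _ hlt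

end FiniteSymbols

section InfiniteSymbols

variable {x q : ℂ}

lemma summable_norm_neg_mul_pow (hq : ‖q‖ < 1) (x : ℂ) :
    Summable fun k : ℕ => ‖-(x * q ^ k)‖ := by
  simpa only [norm_neg, norm_mul, norm_pow] using
    (summable_geometric_of_lt_one (norm_nonneg q) hq).mul_left ‖x‖

lemma tendsto_qPoch (hq : ‖q‖ < 1) (x : ℂ) : Tendsto (qPoch x q) atTop (𝓝 (qPochInf x q)) := by
  have h := (multipliable_one_add_of_summable
    (summable_norm_neg_mul_pow hq x)).hasProd.tendsto_prod_nat
  simp only [← sub_eq_add_neg] at h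
  exact h

lemma qPochInf_ne_zero (hq : ‖q‖ < 1) (hx : ∀ n, qPoch x q n ≠ 0) : qPochInf x q ≠ 0 := by
  have hfactor (k : ℕ) : 1 + -(x * q ^ k) ≠ 0 := by
    rw [← sub_eq_add_neg]
    exact right_ne_zero_of_mul (qPoch_succ x q k ▸ hx (k + 1))
  unfold qPochInf
  simpa only [← sub_eq_add_neg] using
    tprod_one_add_ne_zero_of_summable hfactor (summable_norm_neg_mul_pow hq x)

lemma qPochInf_eq_one_sub_mul (hq : ‖q‖ < 1) (x : ℂ) :
    qPochInf x q = (1 - x) * qPochInf (x * q) q := by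
  refine tendsto_nhds_unique ((tendsto_add_atTop_iff_nat 1).mpr (tendsto_qPoch hq x)) ?_
  simpa only [qPoch_succ'] using (tendsto_qPoch hq (x * q)).const_mul (1 - x)

lemma tendsto_inv_qPoch (hq : ‖q‖ < 1) (hx : ∀ n, qPoch x q n ≠ 0) :
    Tendsto (fun n => (qPoch x q n)⁻¹) atTop (𝓝 (qPochInf x q)⁻¹) :=
  (tendsto_qPoch hq x).inv₀ (qPochInf_ne_zero hq hx)

end InfiniteSymbols

lemma exists_norm_le_of_tendsto {E : Type*} [SeminormedAddCommGroup E] {u : ℕ → E} {a : E}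
    (h : Tendsto u atTop (𝓝 a)) :
    ∃ C, ∀ n, ‖u n‖ ≤ C := by
  simpa using (Metric.isBounded_range_of_tendsto u h).exists_norm_le

lemma tendsto_sum_antidiagonal_mul {R : Type*} [NormedRing R] [CompleteSpace R]
    {f : ℕ → R} (hf : Summable fun r => ‖f r‖) {w : ℕ → ℕ → R} {W : R} {C : ℝ}
    (hC : ∀ r s, ‖w r s‖ ≤ C) (hw : ∀ r, Tendsto (w r) atTop (𝓝 W)) :
    Tendsto (fun n => ∑ p ∈ antidiagonal n, f p.1 * w p.1 p.2) atTop (𝓝 ((∑' r, f r) * W)) := by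
  have hlim : Tendsto (fun n => ∑' r, if r ≤ n then f r * w r (n - r) else 0) atTop
      (𝓝 (∑' r, f r * W)) := by
    refine tendsto_tsum_of_dominated_convergence (hf.mul_right C) (fun r => ?_)
      (Eventually.of_forall fun n r => ?_)
    · refine (((hw r).comp (tendsto_sub_atTop_nat r)).const_mul (f r)).congr' ?_
      filter_upwards [eventually_ge_atTop r] with n hn
      simp [hn]
    · split_ifs
      · exact (norm_mul_le _ _).trans (mul_le_mul_of_nonneg_left (hC _ _) (norm_nonneg _))
      · simpa using mul_nonneg (norm_nonneg _) ((norm_nonneg _).trans (hC 0 0))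
  rw [hf.of_norm.tsum_mul_right] at hlim
  refine hlim.congr fun n => ?_
  rw [Nat.sum_antidiagonal_eq_sum_range_succ_mk,
    tsum_eq_sum (s := range n.succ) fun r hr => if_neg (by simpa using hr)]
  exact sum_congr rfl fun r hr => if_pos (Nat.lt_succ_iff.mp (mem_range.mp hr))

lemma sum_antidiagonal_assoc {M : Type*} [AddCommMonoid M] (f : ℕ → ℕ → ℕ → M) (N : ℕ) :
    ∑ p ∈ antidiagonal N, ∑ r ∈ antidiagonal p.1, f r.1 r.2 p.2 =
      ∑ p ∈ antidiagonal N, ∑ r ∈ antidiagonal p.2, f p.1 r.1 r.2 := by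
  simp only [sum_sigma']
  refine sum_nbij' (fun s => ⟨(s.2.1, s.2.2 + s.1.2), (s.2.2, s.1.2)⟩)
    (fun s => ⟨(s.1.1 + s.2.1, s.2.2), (s.1.1, s.2.1)⟩) ?_ ?_ ?_ ?_ ?_ <;>
    rintro ⟨⟨a, b⟩, c, d⟩ <;>
    simp only [mem_sigma, HasAntidiagonal.mem_antidiagonal] <;>
    grind

lemma succ_choose_two (n : ℕ) : (n + 1).choose 2 = n.choose 2 + n := by
  rw [Nat.choose_succ_succ', Nat.choose_one_right, add_comm]

lemma add_choose_two (m n : ℕ) : (m + n).choose 2 = m.choose 2 + n.choose 2 + m * n := by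
  induction n with
  | zero => simp
  | succ n ih => rw [← add_assoc, succ_choose_two, succ_choose_two, ih]; ring

lemma two_mul_choose_two_add_self (n : ℕ) : 2 * n.choose 2 + n = n ^ 2 := by
  induction n with
  | zero => rfl
  | succ n ih => rw [succ_choose_two]; linarith [ih]

/-- The multipliers `δ_n = (ρ; q)_n q^(n choose 2) (-t)^n` of Bailey's lemma. Of the two
parameters `ρ₁, ρ₂` of the lemma one has been sent to infinity and the other is `ρ`, so that
`t = a q / ρ`; keeping `t` as a parameter of its own allows `ρ = 0`. -/
noncomputable def baileyWeight (ρ t q : ℂ) (n : ℕ) : ℂ :=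
  qPoch ρ q n * q ^ n.choose 2 * (-t) ^ n

section

variable (ρ t q : ℂ)

@[simp] lemma baileyWeight_zero : baileyWeight ρ t q 0 = 1 := by simp [baileyWeight]

lemma baileyWeight_succ (n : ℕ) :
    baileyWeight ρ t q (n + 1) = -((1 - ρ * q ^ n) * q ^ n * t) * baileyWeight ρ t q n := by
  rw [baileyWeight, baileyWeight, qPoch_succ, succ_choose_two]
  ring

lemma baileyWeight_mul_right (n : ℕ) :
    baileyWeight ρ (t * q) q n = q ^ n * baileyWeight ρ t q n := by
  rw [baileyWeight, baileyWeight]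
  ring

lemma baileyWeight_add (m n : ℕ) : baileyWeight ρ t q (m + n) =
    baileyWeight ρ t q m * baileyWeight (ρ * q ^ m) (t * q ^ m) q n := by
  simp only [baileyWeight, qPoch_add, add_choose_two]
  ring

end

lemma one_sub_pow_div_qPoch_succ {q : ℂ} (hq : ∀ n, qPoch q q n ≠ 0) (n : ℕ) :
    (1 - q ^ (n + 1)) / qPoch q q (n + 1) = (qPoch q q n)⁻¹ := by
  have h := hq (n + 1)
  rw [qPoch_succ, ← pow_succ'] at h ⊢
  have := right_ne_zero_of_mul h
  field_simp

lemma sum_antidiagonal_succ_div_qPoch {q : ℂ} (hq : ∀ n, qPoch q q n ≠ 0) (f : ℕ → ℕ → ℂ)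
    (n : ℕ) :
    ∑ p ∈ antidiagonal (n + 1), f p.1 p.2 / (qPoch q q p.1 * qPoch q q p.2) =
      (∑ p ∈ antidiagonal n, (f (p.1 + 1) p.2 + q ^ p.1 * f p.1 (p.2 + 1)) /
        (qPoch q q p.1 * qPoch q q p.2)) / (1 - q ^ (n + 1)) := by
  have hne : 1 - q ^ (n + 1) ≠ 0 := by
    rw [pow_succ']
    exact right_ne_zero_of_mul (qPoch_succ q q n ▸ hq (n + 1))
  -- The `q`-Pascal rule: `1 - q ^ (k + l) = (1 - q ^ k) + q ^ k * (1 - q ^ l)`.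
  have hsplit : ∀ p ∈ antidiagonal (n + 1),
      (1 - q ^ (n + 1)) * (f p.1 p.2 / (qPoch q q p.1 * qPoch q q p.2)) =
        (1 - q ^ p.1) / qPoch q q p.1 * (f p.1 p.2 / qPoch q q p.2) +
          q ^ p.1 * f p.1 p.2 / qPoch q q p.1 * ((1 - q ^ p.2) / qPoch q q p.2) := by
    intro p hp
    rw [← mem_antidiagonal.mp hp, pow_add]
    ring
  rw [eq_div_iff hne, mul_comm, mul_sum, sum_congr rfl hsplit, sum_add_distrib,
    Nat.sum_antidiagonal_succ, Nat.sum_antidiagonal_succ']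
  simp only [one_sub_pow_div_qPoch_succ hq, pow_zero, sub_self, zero_div, zero_mul, mul_zero,
    zero_add, ← sum_add_distrib]
  exact sum_congr rfl fun p _ => by ring

theorem q_chu_vandermonde {q : ℂ} (hq : ∀ n, qPoch q q n ≠ 0) (ρ t : ℂ) (M : ℕ) :
    ∑ p ∈ antidiagonal M, baileyWeight ρ t q p.1 * qPoch (ρ * t * q ^ p.1) q p.2 /
      (qPoch q q p.1 * qPoch q q p.2) = qPoch t q M / qPoch q q M := by
  induction M generalizing t with
  | zero => simp
  | succ M ih =>
    have hterm (m l : ℕ) : baileyWeight ρ t q (m + 1) * qPoch (ρ * t * q ^ (m + 1)) q l +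
        q ^ m * (baileyWeight ρ t q m * qPoch (ρ * t * q ^ m) q (l + 1)) =
        (1 - t) * (baileyWeight ρ (t * q) q m * qPoch (ρ * (t * q) * q ^ m) q l) := by
      rw [baileyWeight_succ, baileyWeight_mul_right, qPoch_succ',
        show ρ * t * q ^ (m + 1) = ρ * (t * q) * q ^ m by ring,
        show ρ * t * q ^ m * q = ρ * (t * q) * q ^ m by ring]
      ring
    rw [sum_antidiagonal_succ_div_qPoch hq
      (fun m l => baileyWeight ρ t q m * qPoch (ρ * t * q ^ m) q l)]
    simp only [hterm, mul_div_assoc (1 - t), ← mul_sum, ih]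
    rw [qPoch_succ', qPoch_succ q q, ← pow_succ', ← div_div]
    ring

/-- The `k`-th term `(-x)^k (x y)^(k choose 2)` of the bilateral theta series of the Jacobi triple
product. For `k < 0` the negative powers of `x` are cancelled, so that `x y = 0` is allowed. -/
noncomputable def thetaTerm (x y : ℂ) : ℤ → ℂ
  | .ofNat k => (x * y) ^ k.choose 2 * (-x) ^ k
  | .negSucc k => (x * y) ^ (k + 1).choose 2 * (-y) ^ (k + 1)

lemma thetaTerm_natCast (x y : ℂ) (k : ℕ) :
    thetaTerm x y k = (x * y) ^ k.choose 2 * (-x) ^ k := rfl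

lemma thetaTerm_neg_natCast (x y : ℂ) (k : ℕ) :
    thetaTerm x y (-k) = (x * y) ^ k.choose 2 * (-y) ^ k := by
  cases k with
  | zero => simpa using thetaTerm_natCast x y 0
  | succ k => rfl

lemma pow_mul_thetaTerm_sub_succ (x y : ℂ) (k n : ℕ) :
    (x * y) ^ k * thetaTerm x y (k - (n + 1 : ℕ)) =
      -(y * (x * y) ^ n) * thetaTerm x y (k - n) := by
  obtain h | h := le_or_gt k n
  · obtain ⟨i, rfl⟩ := Nat.exists_eq_add_of_le h
    rw [show (k : ℤ) - (k + i + 1 : ℕ) = -(i + 1 : ℕ) by push_cast; ring,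
      show (k : ℤ) - (k + i : ℕ) = -(i : ℕ) by push_cast; ring,
      thetaTerm_neg_natCast, thetaTerm_neg_natCast, succ_choose_two]
    ring
  · obtain ⟨i, rfl⟩ := Nat.exists_eq_add_of_lt h
    rw [show ((n + i + 1 : ℕ) : ℤ) - (n + 1 : ℕ) = i by push_cast; ring,
      show ((n + i + 1 : ℕ) : ℤ) - n = (i + 1 : ℕ) by push_cast; ring,
      thetaTerm_natCast, thetaTerm_natCast, succ_choose_two]
    ring

theorem finite_jacobi_triple_product {x y q : ℂ} (hxy : x * y = q) (hq : ∀ n, qPoch q q n ≠ 0)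
    (m n : ℕ) :
    ∑ p ∈ antidiagonal (m + n), thetaTerm x y (p.1 - n) / (qPoch q q p.1 * qPoch q q p.2) =
      qPoch x q m * qPoch y q n / qPoch q q (m + n) := by
  induction n with
  | zero =>
    subst hxy
    simpa [thetaTerm_natCast, baileyWeight] using q_chu_vandermonde hq 0 x m
  | succ n ih =>
    have hterm (k : ℕ) : thetaTerm x y ((k + 1 : ℕ) - (n + 1 : ℕ)) +
        q ^ k * thetaTerm x y (k - (n + 1 : ℕ)) = (1 - y * q ^ n) * thetaTerm x y (k - n) := by
      rw [← hxy, pow_mul_thetaTerm_sub_succ, Nat.cast_succ, Nat.cast_succ, add_sub_add_right_eq_sub]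
      ring
    rw [← add_assoc, sum_antidiagonal_succ_div_qPoch hq
      (fun k _ => thetaTerm x y (k - (n + 1 : ℕ)))]
    simp only [hterm, mul_div_assoc (1 - y * q ^ n), ← mul_sum, ih]
    rw [qPoch_succ y, qPoch_succ q, ← pow_succ', ← div_div]
    ring

/-- The `r`-th term of the theta series folded to `ℕ`: the sum of the bilateral terms of index `-r`
and `r + 1`. -/
noncomputable def foldedTheta (x y : ℂ) (r : ℕ) : ℂ :=
  (x * y) ^ r.choose 2 * (-y) ^ r * (1 - x ^ (2 * r + 1))

lemma thetaTerm_neg_add_thetaTerm_succ (x y : ℂ) (r : ℕ) :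
    thetaTerm x y (-r) + thetaTerm x y (r + 1 : ℕ) = foldedTheta x y r := by
  rw [thetaTerm_neg_natCast, thetaTerm_natCast, foldedTheta, succ_choose_two, pow_add (x * y),
    mul_pow x y r, neg_pow y, neg_pow x]
  ring

lemma sum_antidiagonal_add_one_add_self {M : Type*} [AddCommMonoid M] (f : ℕ → ℕ → M) (n : ℕ) :
    ∑ p ∈ antidiagonal (n + 1 + n), f p.1 p.2 =
      ∑ p ∈ antidiagonal n, (f p.2 (n + 1 + p.1) + f (n + 1 + p.1) p.2) := by
  rw [sum_add_distrib, ← Nat.sum_antidiagonal_swap (f := fun p => f p.2 (n + 1 + p.1))]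
  simp only [Nat.sum_antidiagonal_eq_sum_range_succ_mk, Prod.fst_swap, Prod.snd_swap]
  rw [show (n + 1 + n).succ = (n + 1) + (n + 1) by omega, sum_range_add]
  refine congrArg₂ _ (sum_congr rfl fun k hk => ?_) (sum_congr rfl fun k hk => ?_) <;>
    rw [mem_range] at hk <;> congr 1 <;> omega

/-- `(α, β)` is a Bailey pair relative to `a`:
`β_n = ∑_{r ≤ n} α_r / ((q; q)_{n - r} (a q; q)_{n + r})`. -/
def IsBaileyPair (a q : ℂ) (α β : ℕ → ℂ) : Prop :=
  ∀ n, β n = ∑ p ∈ antidiagonal n, α p.1 / (qPoch q q p.2 * qPoch (a * q) q (n + p.1))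

lemma isBaileyPair_foldedTheta {x y q : ℂ} (hxy : x * y = q) (hq : ∀ n, qPoch q q n ≠ 0) :
    IsBaileyPair q q (foldedTheta x y)
      (fun n => qPoch x q (n + 1) * qPoch y q n / qPoch (q * q) q (2 * n)) := by
  intro n
  have hne : 1 - q ≠ 0 := by simpa [qPoch] using hq 1
  have hterm : ∀ p ∈ antidiagonal n,
      thetaTerm x y (p.2 - n) / (qPoch q q p.2 * qPoch q q (n + 1 + p.1)) +
        thetaTerm x y ((n + 1 + p.1 : ℕ) - n) / (qPoch q q (n + 1 + p.1) * qPoch q q p.2) =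
      foldedTheta x y p.1 / (qPoch q q p.2 * qPoch (q * q) q (n + p.1)) / (1 - q) := by
    intro p hp
    have hn : p.1 + p.2 = n := mem_antidiagonal.mp hp
    rw [← thetaTerm_neg_add_thetaTerm_succ, show n + 1 + p.1 = n + p.1 + 1 by ring, qPoch_succ',
      show (p.2 : ℤ) - n = -p.1 by omega,
      show ((n + p.1 + 1 : ℕ) : ℤ) - n = (p.1 + 1 : ℕ) by omega]
    generalize 1 - q = u
    ring
  have h := finite_jacobi_triple_product hxy hq (n + 1) n
  rw [sum_antidiagonal_add_one_add_self
      fun k l => thetaTerm x y (k - n) / (qPoch q q k * qPoch q q l),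
    sum_congr rfl hterm, ← sum_div, show n + 1 + n = 2 * n + 1 by ring, qPoch_succ' q,
    div_eq_iff hne] at h
  rw [h]
  field_simp

/-- The sequence `β'` that Bailey's lemma makes out of `β`, for the multipliers
`baileyWeight ρ t q`. -/
noncomputable def baileyTransform (ρ t q : ℂ) (β : ℕ → ℂ) (n : ℕ) : ℂ :=
  (∑ p ∈ antidiagonal n, baileyWeight ρ t q p.1 * β p.1 * (qPoch q q p.2)⁻¹) / qPoch t q n

lemma sum_antidiagonal_baileyWeight_add {a q ρ t : ℂ} (hρ : ρ * t = a * q)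
    (hq : ∀ n, qPoch q q n ≠ 0) (ha : ∀ n, qPoch (a * q) q n ≠ 0)
    (ht : ∀ n, qPoch t q n ≠ 0) (r s : ℕ) :
    ∑ p ∈ antidiagonal s, baileyWeight ρ t q (r + p.1) /
      (qPoch q q p.1 * qPoch (a * q) q (r + p.1 + r) * qPoch q q p.2) =
    baileyWeight ρ t q r / qPoch t q r * qPoch t q (r + s) /
      (qPoch q q s * qPoch (a * q) q (r + s + r)) := by
  have hterm : ∀ p ∈ antidiagonal s, baileyWeight ρ t q (r + p.1) /
      (qPoch q q p.1 * qPoch (a * q) q (r + p.1 + r) * qPoch q q p.2) =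
      baileyWeight ρ t q r / qPoch (a * q) q (r + s + r) *
        (baileyWeight (ρ * q ^ r) (t * q ^ r) q p.1 *
          qPoch (ρ * q ^ r * (t * q ^ r) * q ^ p.1) q p.2 / (qPoch q q p.1 * qPoch q q p.2)) := by
    intro p hp
    have hsplit : qPoch (a * q) q (r + s + r) = qPoch (a * q) q (r + p.1 + r) *
        qPoch (ρ * q ^ r * (t * q ^ r) * q ^ p.1) q p.2 := by
      rw [← mem_antidiagonal.mp hp, show r + (p.1 + p.2) + r = r + p.1 + r + p.2 by ring,
        qPoch_add, ← hρ]
      ring_nf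
    have hne := hsplit ▸ ha (r + s + r)
    rw [baileyWeight_add, hsplit]
    generalize qPoch (ρ * q ^ r * (t * q ^ r) * q ^ p.1) q p.2 = u at hne ⊢
    have := left_ne_zero_of_mul hne
    have := right_ne_zero_of_mul hne
    field_simp
  rw [sum_congr rfl hterm, ← mul_sum, q_chu_vandermonde hq, qPoch_add t]
  have := ht r
  field_simp

namespace IsBaileyPair

variable {a q ρ t : ℂ} {α β : ℕ → ℂ}

theorem transform (h : IsBaileyPair a q α β) (hρ : ρ * t = a * q)
    (hq : ∀ n, qPoch q q n ≠ 0) (ha : ∀ n, qPoch (a * q) q n ≠ 0) (ht : ∀ n, qPoch t q n ≠ 0) :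
    IsBaileyPair a q (fun r => baileyWeight ρ t q r / qPoch t q r * α r)
      (baileyTransform ρ t q β) := by
  intro n
  have hexpand : ∀ p ∈ antidiagonal n, baileyWeight ρ t q p.1 * β p.1 * (qPoch q q p.2)⁻¹ =
      ∑ r ∈ antidiagonal p.1, α r.1 * (baileyWeight ρ t q (r.1 + r.2) /
        (qPoch q q r.2 * qPoch (a * q) q (r.1 + r.2 + r.1) * qPoch q q p.2)) := by
    intro p _
    rw [h, mul_sum, sum_mul]
    refine sum_congr rfl fun r hr => ?_
    rw [mem_antidiagonal.mp hr]
    ring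
  rw [baileyTransform, sum_congr rfl hexpand,
    sum_antidiagonal_assoc fun r m l => α r * (baileyWeight ρ t q (r + m) /
      (qPoch q q m * qPoch (a * q) q (r + m + r) * qPoch q q l)), sum_div]
  refine sum_congr rfl fun p hp => ?_
  rw [← mul_sum, sum_antidiagonal_baileyWeight_add hρ hq ha ht, mem_antidiagonal.mp hp]
  have := ht n
  field_simp

theorem tendsto (h : IsBaileyPair a q α β) (hq : ‖q‖ < 1) (ha : ∀ n, qPoch (a * q) q n ≠ 0)
    (hα : Summable fun r => ‖α r‖) :
    Tendsto β atTop (𝓝 ((∑' r, α r) * (qPochInf q q * qPochInf (a * q) q)⁻¹)) := by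
  have hlim_q := tendsto_inv_qPoch hq (qPoch_ne_zero hq hq.le)
  have hlim_a := tendsto_inv_qPoch hq ha
  obtain ⟨C, hC⟩ := exists_norm_le_of_tendsto hlim_q
  obtain ⟨D, hD⟩ := exists_norm_le_of_tendsto hlim_a
  have hbound (r s : ℕ) : ‖(qPoch q q s)⁻¹ * (qPoch (a * q) q (r + s + r))⁻¹‖ ≤ C * D := by
    rw [norm_mul]
    exact mul_le_mul (hC _) (hD _) (norm_nonneg _) ((norm_nonneg _).trans (hC 0))
  have hlim (r : ℕ) : Tendsto (fun s => (qPoch q q s)⁻¹ * (qPoch (a * q) q (r + s + r))⁻¹) atTop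
      (𝓝 ((qPochInf q q)⁻¹ * (qPochInf (a * q) q)⁻¹)) :=
    hlim_q.mul (hlim_a.comp (tendsto_atTop_mono (fun s => by simp only [id]; omega) tendsto_id))
  rw [mul_inv]
  refine (tendsto_sum_antidiagonal_mul hα hbound hlim).congr fun n => ?_
  rw [h n]
  refine sum_congr rfl fun p hp => ?_
  rw [mem_antidiagonal.mp hp, ← mul_inv, div_eq_mul_inv]

end IsBaileyPair

lemma summable_norm_baileyWeight {q : ℂ} (hq : ‖q‖ < 1) (ρ t : ℂ) :
    Summable fun n => ‖baileyWeight ρ t q n‖ := by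
  have hpow : Tendsto (fun n => q ^ n) atTop (𝓝 0) :=
    tendsto_pow_atTop_nhds_zero_of_norm_lt_one hq
  have hratio : Tendsto (fun n => ‖-((1 - ρ * q ^ n) * q ^ n * t)‖) atTop (𝓝 0) := by
    have h : Tendsto (fun n => (1 - ρ * q ^ n) * q ^ n * t) atTop (𝓝 ((1 - ρ * 0) * 0 * t)) :=
      (((hpow.const_mul ρ).const_sub 1).mul hpow).mul_const t
    simpa using h.norm
  have hle : ∀ᶠ n in atTop,
      ‖baileyWeight ρ t q (n + 1)‖ ≤ (1 / 2 : ℝ) * ‖baileyWeight ρ t q n‖ := by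
    filter_upwards [hratio.eventually_le_const (by norm_num : (0 : ℝ) < 1 / 2)] with n hn
    rw [baileyWeight_succ, norm_mul]
    exact mul_le_mul_of_nonneg_right hn (norm_nonneg _)
  exact (summable_of_ratio_norm_eventually_le (by norm_num) hle).norm

lemma summable_norm_foldedTheta {x y : ℂ} (hxy : ‖x * y‖ < 1) :
    Summable fun r => ‖foldedTheta x y r‖ := by
  have hneg := summable_norm_baileyWeight hxy 0 y
  have hpos := (summable_nat_add_iff 1).mpr (summable_norm_baileyWeight hxy 0 x)
  refine Summable.of_nonneg_of_le (fun _ => norm_nonneg _) (fun r => ?_) (hneg.add hpos)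
  rw [← thetaTerm_neg_add_thetaTerm_succ, thetaTerm_neg_natCast, thetaTerm_natCast]
  refine (norm_add_le _ _).trans_eq ?_
  simp [baileyWeight]

theorem jacobi_triple_product {x y q : ℂ} (hxy : x * y = q) (hq : ‖q‖ < 1) :
    ∑' r, foldedTheta x y r = qPochInf x q * qPochInf y q * qPochInf q q := by
  have hq0 := qPoch_ne_zero hq hq.le
  have ha := qPoch_ne_zero (norm_mul_self_lt_one hq) hq.le
  have hsum := (isBaileyPair_foldedTheta hxy hq0).tendsto hq ha
    (summable_norm_foldedTheta (hxy ▸ hq))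
  have hprod : Tendsto (fun n => qPoch x q (n + 1) * qPoch y q n / qPoch (q * q) q (2 * n)) atTop
      (𝓝 (qPochInf x q * qPochInf y q / qPochInf (q * q) q)) :=
    (((tendsto_add_atTop_iff_nat 1).mpr (tendsto_qPoch hq x)).mul (tendsto_qPoch hq y)).div
      ((tendsto_qPoch hq _).comp (tendsto_id.const_mul_atTop' two_pos)) (qPochInf_ne_zero hq ha)
  have h := tendsto_nhds_unique hsum hprod
  rwa [← div_eq_mul_inv, div_mul_eq_div_div, div_left_inj' (qPochInf_ne_zero hq ha),
    div_eq_iff (qPochInf_ne_zero hq hq0)] at h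

theorem IsBaileyPair.tsum_baileyWeight_mul {a q ρ t : ℂ} {α β : ℕ → ℂ} (h : IsBaileyPair a q α β)
    (hρ : ρ * t = a * q) (hq : ‖q‖ < 1) (ha : ∀ n, qPoch (a * q) q n ≠ 0)
    (ht : ∀ n, qPoch t q n ≠ 0) (hα : Summable fun r => ‖α r‖) :
    ∑' n, baileyWeight ρ t q n * β n =
      qPochInf t q / qPochInf (a * q) q * ∑' r, baileyWeight ρ t q r / qPoch t q r * α r := by
  have hq0 := qPoch_ne_zero hq hq.le
  have hlim_q := tendsto_inv_qPoch hq hq0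
  have hlim_t := tendsto_inv_qPoch hq ht
  have hδ := summable_norm_baileyWeight hq ρ t
  obtain ⟨B, hB⟩ := exists_norm_le_of_tendsto (h.tendsto hq ha hα)
  obtain ⟨C, hC⟩ := exists_norm_le_of_tendsto hlim_q
  obtain ⟨D, hD⟩ := exists_norm_le_of_tendsto (hδ.of_norm.tendsto_atTop_zero.mul hlim_t)
  have hδβ : Summable fun n => ‖baileyWeight ρ t q n * β n‖ := by
    refine Summable.of_nonneg_of_le (fun _ => norm_nonneg _) (fun n => ?_) (hδ.mul_right B)
    rw [norm_mul]
    exact mul_le_mul_of_nonneg_left (hB n) (norm_nonneg _)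
  have hδα : Summable fun r => ‖baileyWeight ρ t q r / qPoch t q r * α r‖ := by
    refine Summable.of_nonneg_of_le (fun _ => norm_nonneg _) (fun r => ?_) (hα.mul_left D)
    rw [norm_mul]
    exact mul_le_mul_of_nonneg_right (hD r) (norm_nonneg _)
  have hlim := (tendsto_sum_antidiagonal_mul hδβ (w := fun _ s => (qPoch q q s)⁻¹)
    (fun _ => hC) (fun _ => hlim_q)).div (tendsto_qPoch hq t) (qPochInf_ne_zero hq ht)
  have heq := tendsto_nhds_unique hlim ((h.transform hρ hq0 ha ht).tendsto hq ha hδα)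
  have := qPochInf_ne_zero hq hq0
  have := qPochInf_ne_zero hq ha
  have := qPochInf_ne_zero hq ht
  field_simp at heq ⊢
  linear_combination heq

lemma isBaileyPair_foldedTheta_self {q : ℂ} (hq : ‖q‖ < 1) :
    IsBaileyPair q q (foldedTheta q q) (fun n => (1 - q) / qPoch (q ^ 2) (q ^ 2) n) := by
  have hq0 := qPoch_ne_zero hq hq.le
  have hneg := qPoch_ne_zero (x := -q) (by rwa [norm_neg]) hq.le
  have hα (r : ℕ) : baileyWeight (-q) (-q) q r / qPoch (-q) q r * foldedTheta q 1 r =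
      foldedTheta q q r := by
    have := hneg r
    simp only [baileyWeight, foldedTheta]
    field_simp
    ring
  have hβ (n : ℕ) : baileyTransform (-q) (-q) q
      (fun n => qPoch q q (n + 1) * qPoch 1 q n / qPoch (q * q) q (2 * n)) n =
      (1 - q) / qPoch (q ^ 2) (q ^ 2) n := by
    rw [baileyTransform, ← qPoch_mul_qPoch_neg, sum_eq_single_of_mem (0, n) (by simp)]
    · simp only [baileyWeight_zero, zero_add, qPoch_succ, qPoch_zero, pow_zero, mul_one, one_mul,
        mul_zero, div_one]
      field_simp
    · rintro ⟨_ | k, l⟩ hp hne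
      · simp_all
      · simp [qPoch_succ' 1]
  have h := (isBaileyPair_foldedTheta (mul_one q) hq0).transform (ρ := -q) (t := -q)
    (by ring) hq0 (qPoch_ne_zero (norm_mul_self_lt_one hq) hq.le) hneg
  simpa only [hα, funext hβ] using h

lemma tsum_baileyWeight_div_qPoch_sq {q ρ t : ℂ} (hρ : ρ * t = q * q) (hq : ‖q‖ < 1)
    (ht : ∀ n, qPoch t q n ≠ 0) :
    ∑' n, baileyWeight ρ t q n / qPoch (q ^ 2) (q ^ 2) n =
      qPochInf t q / qPochInf q q *
        ∑' r, baileyWeight ρ t q r / qPoch t q r * foldedTheta q q r := by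
  have hne : 1 - q ≠ 0 := by simpa [qPoch] using qPoch_ne_zero hq hq.le 1
  have hqq := norm_mul_self_lt_one hq
  have h := (isBaileyPair_foldedTheta_self hq).tsum_baileyWeight_mul hρ hq
    (qPoch_ne_zero hqq hq.le) ht (summable_norm_foldedTheta hqq)
  simp only [mul_div_left_comm _ (1 - q), tsum_mul_left] at h
  rw [qPochInf_eq_one_sub_mul hq q, ← mul_right_inj' hne, h]
  field_simp

lemma baileyWeight_neg_pow_three (q : ℂ) (n : ℕ) :
    baileyWeight (-q) (-q ^ 3) (q ^ 2) n = q ^ (n ^ 2 + 2 * n) * qPoch (-q) (q ^ 2) n := by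
  rw [baileyWeight, neg_neg, ← pow_mul, ← pow_mul, mul_assoc, ← pow_add, mul_comm,
    ← two_mul_choose_two_add_self]
  congr 2
  ring

lemma baileyWeight_div_mul_foldedTheta {q : ℂ} (hq : ∀ n, qPoch (-q ^ 3) (q ^ 2) n ≠ 0) (r : ℕ) :
    baileyWeight (-q) (-q ^ 3) (q ^ 2) r / qPoch (-q ^ 3) (q ^ 2) r *
      foldedTheta (q ^ 2) (q ^ 2) r = (1 + q) * foldedTheta q (q ^ 5) r := by
  have hshift : (1 + q) * qPoch (-q ^ 3) (q ^ 2) r =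
      qPoch (-q) (q ^ 2) r * (1 + q ^ (2 * r + 1)) := by
    have h := (qPoch_succ' (-q) (q ^ 2) r).symm.trans (qPoch_succ (-q) (q ^ 2) r)
    rw [show -q * q ^ 2 = -q ^ 3 by ring] at h
    linear_combination h
  have h : (q ^ 2) ^ (2 * r + 1) = (q ^ (2 * r + 1)) ^ 2 := by ring
  rw [div_mul_eq_mul_div, div_eq_iff (hq r), mul_right_comm, hshift, baileyWeight, foldedTheta,
    foldedTheta, h]
  generalize q ^ (2 * r + 1) = u
  ring

/-- Identity (31): for `|q| < 1`,
`Σ_{n≥0} q^{n^2+2n} (-q;q^2)_n / (q^4;q^4)_n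
  = ((-q;q^2)_∞/(q^2;q^2)_∞) (q;q^6)_∞ (q^5;q^6)_∞ (q^6;q^6)_∞`. -/
theorem rr_31 (q : ℂ) (hq : ‖q‖ < 1) :
    ∑' n : ℕ, q ^ (n ^ 2 + 2 * n) * qPoch (-q) (q ^ 2) n / qPoch (q ^ 4) (q ^ 4) n
      = qPochInf (-q) (q ^ 2) / qPochInf (q ^ 2) (q ^ 2) *
          (qPochInf q (q ^ 6) * qPochInf (q ^ 5) (q ^ 6) * qPochInf (q ^ 6) (q ^ 6)) := by
  have hpow {k : ℕ} (hk : k ≠ 0) : ‖q ^ k‖ < 1 := by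
    rw [norm_pow]
    exact pow_lt_one₀ (norm_nonneg q) hq hk
  have hq2 := hpow two_ne_zero
  have hq3 : ∀ n, qPoch (-q ^ 3) (q ^ 2) n ≠ 0 :=
    qPoch_ne_zero (by rw [norm_neg]; exact hpow three_ne_zero) hq2.le
  have hbailey := tsum_baileyWeight_div_qPoch_sq (ρ := -q) (t := -q ^ 3) (by ring) hq2 hq3
  rw [tsum_congr (baileyWeight_div_mul_foldedTheta hq3), tsum_mul_left,
    jacobi_triple_product (by ring : q * q ^ 5 = q ^ 6) (hpow (by norm_num))] at hbailey
  simp only [baileyWeight_neg_pow_three, show (q ^ 2) ^ 2 = q ^ 4 by ring] at hbailey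
  rw [hbailey, qPochInf_eq_one_sub_mul hq2 (-q), show -q * q ^ 2 = -q ^ 3 by ring]
  ring
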